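/- For every nonconstant total Boolean function f : {0,1}^n → {0,1}, the value of the single-bit adversary semidefinite program equals the spectral sensitivity: GSA₁(f) = λ(f). -/

import Mathlib

/-!
Write `A = adjMat f`, a symmetric `0/1` matrix supported on edges of the hypercube.

*Upper bound.* Let `(Z, Δ)` be feasible. Along an edge `{x, y}` in direction `i` the `2 × 2` principal
minor of `Δ - Z ∘ D_i` on `{x, y}` is nonnegative, and `Z x y = Z y x` there, so
`Z x y ≤ √(Δ x x) √(Δ y y)` (`entry_le_of_feasible`). Hence `⟨Z, A⟩ ≤ ⟨v, A v⟩ ≤ ‖A‖`, where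
`v = √(diag Δ)` is a unit vector because `Δ` has trace `1`.

*Lower bound.* For a nonnegative unit vector `v` put `Z x y = v x * A x y * v y` and
`Δ = diag (v x ^ 2)`. Then `Δ - Z ∘ D_i = diag v * (1 - A ∘ D_i) * diag v`, and `A ∘ D_i` is the
adjacency matrix of a matching, so `1 - A ∘ D_i ⪰ 0` (`posSemidef_one_sub_edges`). Since `A` is
`0/1`-valued, the objective is `⟨v, A v⟩` (`quad_mem_feasible`). As `A` is symmetric, `‖A‖` is the
supremum of the absolute values of its Rayleigh quotients, and as `A ≥ 0` entrywise, replacing a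
vector by its entrywise absolute value does not decrease the absolute value of the quadratic form.
-/

/-- Flip bit `i` of the Boolean string `x`. -/
def flipBit {n : ℕ} (x : Fin n → Bool) (i : Fin n) : Fin n → Bool :=
  Function.update x i (!x i)

/-- Sensitivity of `f` at input `x`. -/
def sensAt {n : ℕ} (f : (Fin n → Bool) → Bool) (x : Fin n → Bool) : ℕ :=
  (Finset.univ.filter fun i : Fin n => f (flipBit x i) ≠ f x).card

/-- (Maximum) sensitivity of `f`. -/
def sens {n : ℕ} (f : (Fin n → Bool) → Bool) : ℕ :=
  Finset.univ.sup (sensAt f)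

/-- `b`-sensitivity of `f`: max sensitivity over inputs with value `b` (0 if none). -/
def sensB {n : ℕ} (f : (Fin n → Bool) → Bool) (b : Bool) : ℕ :=
  (Finset.univ.filter fun x => f x = b).sup (sensAt f)

/-- Adjacency matrix of the sensitivity graph of `f`. -/
def adjMat {n : ℕ} (f : (Fin n → Bool) → Bool) :
    Matrix (Fin n → Bool) (Fin n → Bool) ℝ :=
  fun x y => if (∃ i, y = flipBit x i) ∧ f x ≠ f y then 1 else 0

/-- Spectral norm (ℓ₂ operator norm) of a real matrix. -/
noncomputable def specNorm {m k : Type*} [Fintype m] [Fintype k] [DecidableEq k]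
    (M : Matrix m k ℝ) : ℝ :=
  ‖LinearMap.toContinuousLinearMap (Matrix.toEuclideanLin M)‖

/-- Spectral sensitivity of `f`. -/
noncomputable def specSens {n : ℕ} (f : (Fin n → Bool) → Bool) : ℝ :=
  specNorm (adjMat f)

/-- Degree of `f`: minimal total degree of a real polynomial representing `f` on `{0,1}^n`. -/
noncomputable def bdeg {n : ℕ} (f : (Fin n → Bool) → Bool) : ℕ :=
  sInf {d | ∃ p : MvPolynomial (Fin n) ℝ, p.totalDegree = d ∧
    ∀ x : Fin n → Bool,
      MvPolynomial.eval (fun i => if x i then (1 : ℝ) else 0) p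
        = if f x then 1 else 0}

/-- The matrix `D_i`, with `D_i[x,y] = 1` iff `x` and `y` differ in bit `i`. -/
def Dmat {n : ℕ} (i : Fin n) : Matrix (Fin n → Bool) (Fin n → Bool) ℝ :=
  fun x y => if x i ≠ y i then 1 else 0

/-- Value of the single-bit adversary semidefinite program: maximize `⟨Z, A_f⟩`
subject to `Δ` diagonal with trace `1`, `Z ≥ 0` entrywise, and
`Δ − Z∘D_i ⪰ 0` for every `i`. -/
noncomputable def GSA1 {n : ℕ} (f : (Fin n → Bool) → Bool) : ℝ :=
  sSup {r | ∃ Z Δ : Matrix (Fin n → Bool) (Fin n → Bool) ℝ,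
    (∀ x y, x ≠ y → Δ x y = 0) ∧ Δ.trace = 1 ∧ (∀ x y, 0 ≤ Z x y) ∧
    (∀ i : Fin n, (Δ - Matrix.hadamard Z (Dmat i)).PosSemidef) ∧
    r = ∑ x : Fin n → Bool, ∑ y : Fin n → Bool, Z x y * adjMat f x y}

/-- The quadratic form `⟨v, A_f v⟩` of the sensitivity graph. -/
noncomputable def sensQuad {n : ℕ} (f : (Fin n → Bool) → Bool) (v : (Fin n → Bool) → ℝ) : ℝ :=
  ∑ x, ∑ y, v x * adjMat f x y * v y

lemma flipBit_flipBit {n : ℕ} (x : Fin n → Bool) (i : Fin n) :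
    flipBit (flipBit x i) i = x := by
  simp [flipBit]

lemma flipBit_apply_self {n : ℕ} (x : Fin n → Bool) (i : Fin n) :
    flipBit x i i = !x i := by
  simp [flipBit]

lemma flipBit_apply_ne {n : ℕ} (x : Fin n → Bool) {i j : Fin n} (h : j ≠ i) :
    flipBit x i j = x j := by
  simp [flipBit, h]

lemma adjMat_nonneg {n : ℕ} (f : (Fin n → Bool) → Bool) (x y : Fin n → Bool) :
    0 ≤ adjMat f x y := by
  unfold adjMat; split_ifs <;> norm_num

lemma adjMat_mul_self {n : ℕ} (f : (Fin n → Bool) → Bool) (x y : Fin n → Bool) :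
    adjMat f x y * adjMat f x y = adjMat f x y := by
  unfold adjMat; split_ifs <;> norm_num

lemma adjMat_comm {n : ℕ} (f : (Fin n → Bool) → Bool) (x y : Fin n → Bool) :
    adjMat f x y = adjMat f y x := by
  unfold adjMat
  have key : ∀ x y : Fin n → Bool, (∃ i, y = flipBit x i) → ∃ i, x = flipBit y i := by
    rintro x _ ⟨i, rfl⟩
    exact ⟨i, (flipBit_flipBit x i).symm⟩
  congr 1
  exact propext (and_congr ⟨key x y, key y x⟩ ne_comm)

lemma Dmat_comm {n : ℕ} (i : Fin n) (x y : Fin n → Bool) : Dmat i x y = Dmat i y x := by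
  simp only [Dmat, ne_comm]

/-- The only neighbour of `x` in direction `i` is `flipBit x i`. -/
lemma adjMat_mul_Dmat_of_ne {n : ℕ} (f : (Fin n → Bool) → Bool) (i : Fin n)
    {x y : Fin n → Bool} (h : y ≠ flipBit x i) : adjMat f x y * Dmat i x y = 0 := by
  unfold adjMat Dmat
  by_cases h1 : (∃ j, y = flipBit x j) ∧ f x ≠ f y
  · obtain ⟨⟨j, rfl⟩, -⟩ := h1
    have hij : i ≠ j := by rintro rfl; exact h rfl
    simp [flipBit_apply_ne x hij]
  · simp [h1]

/-- `A_f ∘ D_i` is the adjacency matrix of a matching, so it has spectral radius at most `1`. -/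
lemma posSemidef_one_sub_edges {n : ℕ} (f : (Fin n → Bool) → Bool) (i : Fin n) :
    ((1 : Matrix (Fin n → Bool) (Fin n → Bool) ℝ) -
      Matrix.hadamard (adjMat f) (Dmat i)).PosSemidef := by
  refine Matrix.PosSemidef.of_dotProduct_mulVec_nonneg ?_ fun w => ?_
  · refine Matrix.isHermitian_one.sub ?_
    ext x y
    simp [adjMat_comm f y x, Dmat_comm i y x]
  · have hrow : ∀ x, (Matrix.hadamard (adjMat f) (Dmat i)).mulVec w x
        = adjMat f x (flipBit x i) * Dmat i x (flipBit x i) * w (flipBit x i) := by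
      intro x
      rw [Matrix.mulVec, dotProduct, Finset.sum_eq_single (flipBit x i)]
      · rfl
      · intro y _ hy
        rw [Matrix.hadamard_apply, adjMat_mul_Dmat_of_ne f i hy, zero_mul]
      · simp
    have hinv : ∑ x, w (flipBit x i) ^ 2 = ∑ x, w x ^ 2 :=
      Equiv.sum_comp (Function.Involutive.toPerm (fun x => flipBit x i)
        fun x => flipBit_flipBit x i) fun x => w x ^ 2
    have hterm : ∀ x, 0 ≤ w x ^ 2 + w (flipBit x i) ^ 2 - 2 * (w x *
        (adjMat f x (flipBit x i) * Dmat i x (flipBit x i) * w (flipBit x i))) := by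
      intro x
      unfold adjMat Dmat
      split_ifs <;> nlinarith [sq_nonneg (w x - w (flipBit x i)), sq_nonneg (w x),
        sq_nonneg (w (flipBit x i))]
    have hsum := Finset.sum_nonneg fun x (_ : x ∈ Finset.univ) => hterm x
    rw [Finset.sum_sub_distrib, Finset.sum_add_distrib, hinv, ← Finset.mul_sum] at hsum
    rw [Matrix.sub_mulVec, Matrix.one_mulVec, dotProduct_sub]
    simp only [dotProduct, hrow, star_trivial, ← pow_two]
    linarith

/-- Every unit vector `v ≥ 0` gives a feasible point with objective value `⟨v, A_f v⟩`. -/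
lemma quad_mem_feasible {n : ℕ} (f : (Fin n → Bool) → Bool) (v : (Fin n → Bool) → ℝ)
    (hv : ∀ x, 0 ≤ v x) (h1 : ∑ x, v x ^ 2 = 1) :
    sensQuad f v ∈ {r | ∃ Z Δ : Matrix (Fin n → Bool) (Fin n → Bool) ℝ,
    (∀ x y, x ≠ y → Δ x y = 0) ∧ Δ.trace = 1 ∧ (∀ x y, 0 ≤ Z x y) ∧
    (∀ i : Fin n, (Δ - Matrix.hadamard Z (Dmat i)).PosSemidef) ∧
    r = ∑ x : Fin n → Bool, ∑ y : Fin n → Bool, Z x y * adjMat f x y} := by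
  refine ⟨fun x y => v x * adjMat f x y * v y, Matrix.diagonal fun x => v x ^ 2,
    fun x y h => Matrix.diagonal_apply_ne _ h, by rw [Matrix.trace_diagonal, h1],
    fun x y => mul_nonneg (mul_nonneg (hv x) (adjMat_nonneg f x y)) (hv y), fun i => ?_, ?_⟩
  · have h := (posSemidef_one_sub_edges f i).conjTranspose_mul_mul_same (Matrix.diagonal v)
    convert h using 1
    ext x y
    rw [Matrix.diagonal_conjTranspose, Matrix.mul_diagonal, Matrix.diagonal_mul,
      Matrix.sub_apply, Matrix.sub_apply]
    simp only [Matrix.hadamard, Matrix.of_apply]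
    by_cases hxy : x = y
    · subst hxy
      simp [Dmat]
      ring
    · simp [hxy]
      ring
  · unfold sensQuad
    refine Finset.sum_congr rfl fun x _ => Finset.sum_congr rfl fun y _ => ?_
    linear_combination -(v x * v y) * adjMat_mul_self f x y

lemma reApplyInnerSelf_adjMat {n : ℕ} (f : (Fin n → Bool) → Bool)
    (v : EuclideanSpace ℝ (Fin n → Bool)) :
    (LinearMap.toContinuousLinearMap
      (Matrix.toEuclideanLin (adjMat f))).reApplyInnerSelf v = sensQuad f v := by
  rw [ContinuousLinearMap.reApplyInnerSelf_apply]
  simp only [LinearMap.coe_toContinuousLinearMap', PiLp.inner_apply, sensQuad,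
    Matrix.ofLp_toLpLin, Matrix.toLin'_apply, Matrix.mulVec, dotProduct]
  simp [Finset.mul_sum, mul_assoc]

lemma sensQuad_le_specSens {n : ℕ} (f : (Fin n → Bool) → Bool) (v : (Fin n → Bool) → ℝ)
    (h1 : ∑ x, v x ^ 2 = 1) : sensQuad f v ≤ specSens f := by
  have h := (le_abs_self _).trans ((LinearMap.toContinuousLinearMap
    (Matrix.toEuclideanLin (adjMat f))).rayleighQuotient_le_norm (WithLp.toLp 2 v))
  rw [ContinuousLinearMap.rayleighQuotient, reApplyInnerSelf_adjMat,
    EuclideanSpace.real_norm_sq_eq] at h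
  simpa [h1, specSens, specNorm] using h

/-- The `2 × 2` principal minor of `Δ - Z ∘ D_i` on an edge in direction `i` bounds the entry
of `Z` at this edge. -/
lemma entry_le_of_feasible {n : ℕ} {Z Δ : Matrix (Fin n → Bool) (Fin n → Bool) ℝ}
    (hΔ : ∀ x y, x ≠ y → Δ x y = 0) (i : Fin n)
    (h : (Δ - Matrix.hadamard Z (Dmat i)).PosSemidef) (x : Fin n → Bool) :
    Z x (flipBit x i) ≤ √(Δ x x) * √(Δ (flipBit x i) (flipBit x i)) := by
  set y := flipBit x i with hy
  have hxi : x i ≠ y i := by simp [hy, flipBit_apply_self]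
  have hne : x ≠ y := fun h => hxi (congrFun h i)
  have hsymm : Z y x = Z x y := by
    have := h.1.apply x y
    simpa [hΔ x y hne, hΔ y x hne.symm, Dmat, hxi, hxi.symm] using this
  have hx : 0 ≤ Δ x x := by simpa [Dmat] using h.diag_nonneg (i := x)
  have hdet := (h.submatrix ![x, y]).det_nonneg
  rw [Matrix.det_fin_two] at hdet
  simp [hΔ x y hne, hΔ y x hne.symm, Dmat, hxi, hxi.symm, hsymm] at hdet
  rw [← Real.sqrt_mul hx]
  exact Real.le_sqrt_of_sq_le (by nlinarith)

lemma le_specSens_of_feasible {n : ℕ} (f : (Fin n → Bool) → Bool)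
    {Z Δ : Matrix (Fin n → Bool) (Fin n → Bool) ℝ}
    (hΔ : ∀ x y, x ≠ y → Δ x y = 0) (htr : Δ.trace = 1)
    (h : ∀ i : Fin n, (Δ - Matrix.hadamard Z (Dmat i)).PosSemidef) :
    ∑ x : Fin n → Bool, ∑ y : Fin n → Bool, Z x y * adjMat f x y ≤ specSens f := by
  -- For `n = 0` no semidefinite constraint is present, but then `f` has no sensitive edge.
  rcases Nat.eq_zero_or_pos n with rfl | hn
  · have h0 : ∀ x y, adjMat f x y = 0 := fun x y => by simp [adjMat]
    simp only [h0, mul_zero, Finset.sum_const_zero]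
    exact norm_nonneg _
  · have hd : ∀ x, 0 ≤ Δ x x := fun x => by
      simpa [Dmat] using (h ⟨0, hn⟩).diag_nonneg (i := x)
    refine le_trans ?_ (sensQuad_le_specSens f (fun x => √(Δ x x)) ?_)
    · refine Finset.sum_le_sum fun x _ => Finset.sum_le_sum fun y _ => ?_
      by_cases hxy : (∃ i, y = flipBit x i) ∧ f x ≠ f y
      · have ha : adjMat f x y = 1 := if_pos hxy
        obtain ⟨⟨i, rfl⟩, -⟩ := hxy
        rw [ha, mul_one, mul_one]
        exact entry_le_of_feasible hΔ i (h i) x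
      · have ha : adjMat f x y = 0 := if_neg hxy
        simp [ha]
    · simpa [Real.sq_sqrt (hd _), Matrix.trace] using htr

lemma abs_sensQuad_le {n : ℕ} (f : (Fin n → Bool) → Bool) (v : (Fin n → Bool) → ℝ) :
    |sensQuad f v| ≤ sensQuad f fun x => |v x| := by
  refine (Finset.abs_sum_le_sum_abs _ _).trans (Finset.sum_le_sum fun x _ => ?_)
  refine (Finset.abs_sum_le_sum_abs _ _).trans (Finset.sum_le_sum fun y _ => ?_)
  rw [abs_mul, abs_mul, abs_of_nonneg (adjMat_nonneg f x y)]

lemma sensQuad_div {n : ℕ} (f : (Fin n → Bool) → Bool) (v : (Fin n → Bool) → ℝ) (c : ℝ) :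
    (sensQuad f fun x => v x / c) = sensQuad f v / c ^ 2 := by
  simp only [sensQuad, Finset.sum_div]
  refine Finset.sum_congr rfl fun x _ => Finset.sum_congr rfl fun y _ => ?_
  ring

/-- By symmetry of `A_f`, a bound on its quadratic form over nonnegative unit vectors bounds its
spectral norm. -/
lemma specSens_le {n : ℕ} (f : (Fin n → Bool) → Bool) {M : ℝ} (hM : 0 ≤ M)
    (h : ∀ v : (Fin n → Bool) → ℝ, (∀ x, 0 ≤ v x) → ∑ x, v x ^ 2 = 1 → sensQuad f v ≤ M) :
    specSens f ≤ M := by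
  have hsym : (adjMat f).IsHermitian := by
    ext x y
    simp [adjMat_comm f y x]
  rw [specSens, specNorm, ContinuousLinearMap.norm_eq_iSup_rayleighQuotient _
    (by simpa using Matrix.isSymmetric_toEuclideanLin_iff.2 hsym)]
  refine ciSup_le fun v => ?_
  rw [ContinuousLinearMap.rayleighQuotient, reApplyInnerSelf_adjMat, abs_div,
    abs_of_nonneg (sq_nonneg ‖v‖)]
  rcases eq_or_ne v 0 with rfl | hv
  · simpa using hM
  · have hpos : 0 < ‖v‖ := norm_pos_iff.2 hv
    refine (div_le_div_of_nonneg_right (abs_sensQuad_le f v) (sq_nonneg _)).trans ?_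
    rw [← sensQuad_div]
    refine h _ (fun x => by positivity) ?_
    simp only [div_pow, sq_abs]
    rw [← Finset.sum_div, ← EuclideanSpace.real_norm_sq_eq, div_self (by positivity)]

/-- For every nonconstant total Boolean function `f`, the value of the single-bit
adversary semidefinite program equals the spectral sensitivity: `GSA₁(f) = λ(f)`. -/
theorem gsa1_eq_specSens {n : ℕ} (f : (Fin n → Bool) → Bool)
    (hf : ∃ x y, f x ≠ f y) :
    GSA1 f = specSens f := by
  have hub : ∀ r ∈ {r | ∃ Z Δ : Matrix (Fin n → Bool) (Fin n → Bool) ℝ,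
      (∀ x y, x ≠ y → Δ x y = 0) ∧ Δ.trace = 1 ∧ (∀ x y, 0 ≤ Z x y) ∧
      (∀ i : Fin n, (Δ - Matrix.hadamard Z (Dmat i)).PosSemidef) ∧
      r = ∑ x : Fin n → Bool, ∑ y : Fin n → Bool, Z x y * adjMat f x y}, r ≤ specSens f := by
    rintro _ ⟨Z, Δ, hΔ, htr, -, h, rfl⟩
    exact le_specSens_of_feasible f hΔ htr h
  have hle : ∀ v : (Fin n → Bool) → ℝ, (∀ x, 0 ≤ v x) → ∑ x, v x ^ 2 = 1 →
      sensQuad f v ≤ GSA1 f := fun v hv h1 =>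
    le_csSup ⟨_, hub⟩ (quad_mem_feasible f v hv h1)
  -- A point mass is a nonnegative unit vector, so the feasible set is nonempty and `GSA1 f ≥ 0`.
  let e : (Fin n → Bool) → ℝ := Pi.single (fun _ => false) 1
  have he : ∀ x, 0 ≤ e x := fun x => by
    by_cases hx : x = fun _ => false <;> simp [e, hx]
  have he1 : ∑ x, e x ^ 2 = 1 := by simp [e, Pi.single_apply, ite_pow]
  have h0 : 0 ≤ sensQuad f e := Finset.sum_nonneg fun x _ => Finset.sum_nonneg fun y _ =>
    mul_nonneg (mul_nonneg (he x) (adjMat_nonneg f x y)) (he y)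
  exact le_antisymm (csSup_le ⟨_, quad_mem_feasible f e he he1⟩ hub)
    (specSens_le f (h0.trans (hle e he he1)) hle)
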